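/- Let d, c_i ∈ (0,1) with ∑ c_i > 1, and let x* ∈ (0,1) be the unique solution of 1 − x = ∏_{i∈d}(1 − c_i x). Then x* is a continuously differentiable function of c = (c_i) on the open set C = { c : c_i ∈ (0,1), ∑ c_i > 1 }. -/

import Mathlib

/-!
For fixed `c` the gap `h x = (1 - x) - ∏ i ∈ d, (1 - c i * x)` has derivative
`∑ i ∈ d, c i * ∏ j ∈ d.erase i, (1 - c j * x) - 1`, which is strictly decreasing to the left of
`1` because `1 < ∑ c i` forces two of the `c i` to be positive. So `h` is strictly concave, with
`h 0 = 0`, `h' 0 = ∑ c i - 1 > 0` and `h 1 < 0`. It therefore has exactly one zero in `(0, 1)`, and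
its slope there is below that of the chord from the origin, which is `0`. The implicit function
theorem gives a local analytic branch of zeros, which by uniqueness is the root itself.
-/

open Set
open scoped Topology ContDiff

theorem isInvertible_fderiv_comp_inr_of_hasDerivAt {𝕜 E : Type*} [NontriviallyNormedField 𝕜]
    [NormedAddCommGroup E] [NormedSpace 𝕜 E] {f : E × 𝕜 → 𝕜} {p : E × 𝕜} {f' : 𝕜}
    (hf : DifferentiableAt 𝕜 f p) (hderiv : HasDerivAt (fun y ↦ f (p.1, y)) f' p.2)
    (hf' : f' ≠ 0) : (fderiv 𝕜 f p ∘L .inr 𝕜 E 𝕜).IsInvertible := by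
  have hpartial : HasFDerivAt (fun y ↦ f (p.1, y)) (fderiv 𝕜 f p ∘L .inr 𝕜 E 𝕜) p.2 :=
    hf.hasFDerivAt.comp p.2 (hasFDerivAt_prodMk_right p.1 p.2)
  rw [hpartial.unique hderiv.hasFDerivAt]
  exact ⟨.unitsEquivAut 𝕜 (.mk0 f' hf'), by ext; simp⟩

theorem contDiffOn_of_apply_eq_zero_of_unique {𝕜 E F G : Type*} [RCLike 𝕜]
    [NormedAddCommGroup E] [NormedSpace 𝕜 E] [CompleteSpace E]
    [NormedAddCommGroup F] [NormedSpace 𝕜 F] [CompleteSpace F]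
    [NormedAddCommGroup G] [NormedSpace 𝕜 G] [CompleteSpace G]
    {n : ℕ∞ω} (hn : n ≠ 0) {f : E × F → G} {φ : E → F} {s : Set E} {U : Set F} (hU : IsOpen U)
    (hf : ∀ x ∈ s, ContDiffAt 𝕜 n f (x, φ x))
    (hinv : ∀ x ∈ s, (fderiv 𝕜 f (x, φ x) ∘L .inr 𝕜 E F).IsInvertible)
    (hmem : ∀ x ∈ s, φ x ∈ U) (hzero : ∀ x ∈ s, f (x, φ x) = 0)
    (huniq : ∀ x ∈ s, ∀ y ∈ U, f (x, y) = 0 → y = φ x) : ContDiffOn 𝕜 n φ s := by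
  intro x hx
  have hψ := (hf x hx).contDiffAt_implicitFunction hn (hinv x hx)
  have hψx := (hf x hx).implicitFunction_apply_self hn (hinv x hx)
  have hψ_zero := (hf x hx).eventually_apply_implicitFunction hn (hinv x hx)
  set ψ := (hf x hx).implicitFunction hn (hinv x hx)
  have hψ_mem : ∀ᶠ z in 𝓝 x, ψ z ∈ U :=
    hψ.continuousAt.eventually_mem (hU.mem_nhds (hψx ▸ hmem x hx))
  refine hψ.contDiffWithinAt.congr_of_eventuallyEq ?_ hψx.symm
  filter_upwards [self_mem_nhdsWithin, hψ_zero.filter_mono nhdsWithin_le_nhds,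
    hψ_mem.filter_mono nhdsWithin_le_nhds] with z hz hz_zero hz_mem
  exact (huniq z hz (ψ z) hz_mem (hz_zero.trans (hzero x hx))).symm

section RealFunction

variable {f : ℝ → ℝ} {f' a b : ℝ}

theorem exists_mem_Ioo_eq_of_hasDerivAt_pos (hab : a < b) (hf : ContinuousOn f (Icc a b))
    (hderiv : HasDerivAt f f' a) (hf' : 0 < f') (hfb : f b < f a) :
    ∃ x ∈ Ioo a b, f x = f a := by
  have hcont : ContinuousOn (dslope f a) (Icc a b) := fun x hx ↦ by
    rcases eq_or_ne x a with rfl | hxa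
    · exact (continuousAt_dslope_same.2 hderiv.differentiableAt).continuousWithinAt
    · exact (continuousWithinAt_dslope_of_ne hxa).2 (hf x hx)
  have hleft : 0 < dslope f a a := by rwa [dslope_same, hderiv.deriv]
  have hright : dslope f a b < 0 := by
    rw [dslope_of_ne f hab.ne', slope_def_field]
    exact div_neg_of_neg_of_pos (sub_neg.2 hfb) (sub_pos.2 hab)
  obtain ⟨x, hx, hx_zero⟩ := intermediate_value_Ioo' hab.le hcont ⟨hright, hleft⟩
  rw [dslope_of_ne f hx.1.ne', slope_eq_zero_iff] at hx_zero
  exact ⟨x, hx, hx_zero.symm⟩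

theorem subsingleton_setOf_lt_and_apply_eq_of_strictConcaveOn {s : Set ℝ}
    (hf : StrictConcaveOn ℝ s f) (ha : a ∈ s) : {x ∈ s | a < x ∧ f x = f a}.Subsingleton := by
  rintro x ⟨hx, hax, hfx⟩ y ⟨hy, hay, hfy⟩
  by_contra hne
  wlog hxy : x < y generalizing x y
  · exact this hy hay hfy hx hax hfx (Ne.symm hne) ((not_lt.1 hxy).lt_of_ne' hne)
  have hslope := hf.slope_anti_adjacent ha hy hax hxy
  simp only [hfx, hfy, sub_self, zero_div, lt_irrefl] at hslope

theorem deriv_neg_of_strictConcaveOn_of_apply_eq {s : Set ℝ} (hf : StrictConcaveOn ℝ s f)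
    (ha : a ∈ s) (hb : b ∈ s) (hab : a < b) (hfab : f a = f b) (hdiff : DifferentiableAt ℝ f b) :
    deriv f b < 0 :=
  (hf.deriv_lt_slope ha hb hab hdiff).trans_eq (slope_eq_zero_iff.2 hfab)

end RealFunction

section LikelihoodGap

variable {ι : Type*} {d : Finset ι} {c : ι → ℝ} {x : ℝ}

/-- The function `h(x) = (1 - x) - ∏ (1 - c_i x)` of the paper, whose zero in `(0, 1)` is the
root `x*` of the likelihood polynomial. -/
def likelihoodGap (d : Finset ι) (c : ι → ℝ) (x : ℝ) : ℝ :=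
  (1 - x) - ∏ i ∈ d, (1 - c i * x)

theorem likelihoodGap_eq_zero_iff :
    likelihoodGap d c x = 0 ↔ 1 - x = ∏ i ∈ d, (1 - c i * x) :=
  sub_eq_zero

@[simp]
theorem likelihoodGap_zero : likelihoodGap d c 0 = 0 := by
  simp [likelihoodGap]

theorem likelihoodGap_one_neg (hc : ∀ i ∈ d, c i < 1) : likelihoodGap d c 1 < 0 := by
  have hprod : 0 < ∏ i ∈ d, (1 - c i * 1) :=
    Finset.prod_pos fun i hi ↦ by linarith [hc i hi]
  rw [likelihoodGap]
  linarith

theorem contDiff_likelihoodGap [Fintype ι] {n : ℕ∞ω} :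
    ContDiff ℝ n fun p : (ι → ℝ) × ℝ ↦ likelihoodGap d p.1 p.2 :=
  (contDiff_const.sub contDiff_snd).sub (contDiff_prod fun i _ ↦ by fun_prop)

theorem hasDerivAt_likelihoodGap [DecidableEq ι] (d : Finset ι) (c : ι → ℝ) (x : ℝ) :
    HasDerivAt (likelihoodGap d c) (∑ i ∈ d, c i * ∏ j ∈ d.erase i, (1 - c j * x) - 1) x := by
  have hfactor : ∀ i ∈ d, HasDerivAt (fun x ↦ 1 - c i * x) (-c i) x := fun i _ ↦ by
    simpa using ((hasDerivAt_id x).const_mul (c i)).const_sub 1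
  convert! ((hasDerivAt_id x).const_sub 1).sub (HasDerivAt.fun_finsetProd hfactor) using 1
  simp only [smul_eq_mul, mul_comm _ (-c _), neg_mul, Finset.sum_neg_distrib]
  ring

theorem hasDerivAt_likelihoodGap_zero :
    HasDerivAt (likelihoodGap d c) (∑ i ∈ d, c i - 1) 0 := by
  classical
  simpa using hasDerivAt_likelihoodGap d c 0

theorem differentiable_likelihoodGap : Differentiable ℝ (likelihoodGap d c) := by
  classical
  exact fun x ↦ (hasDerivAt_likelihoodGap d c x).differentiableAt

theorem exists_ne_pos_pos_of_one_lt_sum (hc : ∀ i ∈ d, c i ≤ 1) (hsum : 1 < ∑ i ∈ d, c i) :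
    ∃ i ∈ d, ∃ j ∈ d, i ≠ j ∧ 0 < c i ∧ 0 < c j := by
  classical
  obtain ⟨i, hi, hci⟩ : ∃ i ∈ d, 0 < c i :=
    Finset.exists_lt_of_sum_lt (by simpa using one_pos.trans hsum)
  have hsum_erase : 0 < ∑ j ∈ d.erase i, c j := by
    linarith [hc i hi, Finset.add_sum_erase d c hi]
  obtain ⟨j, hj, hcj⟩ : ∃ j ∈ d.erase i, 0 < c j :=
    Finset.exists_lt_of_sum_lt (by simpa using hsum_erase)
  exact ⟨i, hi, j, Finset.mem_of_mem_erase hj, (Finset.ne_of_mem_erase hj).symm, hci, hcj⟩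

theorem one_sub_mul_pos {t : ℝ} (ht : t ∈ Icc 0 1) (hx : x < 1) : 0 < 1 - t * x := by
  rcases le_total x 0 with hx0 | hx0
  · linarith [mul_nonpos_of_nonneg_of_nonpos ht.1 hx0]
  · linarith [mul_le_of_le_one_left hx0 ht.2]

theorem strictAntiOn_sum_mul_prod_erase [DecidableEq ι] (hc : ∀ i ∈ d, c i ∈ Icc 0 1)
    (hpair : ∃ i ∈ d, ∃ j ∈ d, i ≠ j ∧ 0 < c i ∧ 0 < c j) :
    StrictAntiOn (fun x ↦ ∑ i ∈ d, c i * ∏ j ∈ d.erase i, (1 - c j * x)) (Iio 1) := by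
  intro x _ y hy hxy
  have hpos : ∀ i ∈ d, 0 < 1 - c i * y := fun i hi ↦ one_sub_mul_pos (hc i hi) hy
  have hle : ∀ i ∈ d, 1 - c i * y ≤ 1 - c i * x := fun i hi ↦
    sub_le_sub_left (mul_le_mul_of_nonneg_left hxy.le (hc i hi).1) 1
  obtain ⟨i, hi, j, hj, hij, hci, hcj⟩ := hpair
  refine Finset.sum_lt_sum (fun k hk ↦ ?_) ⟨i, hi, ?_⟩
  · refine mul_le_mul_of_nonneg_left (Finset.prod_le_prod ?_ ?_) (hc k hk).1
    · exact fun l hl ↦ (hpos l (Finset.mem_of_mem_erase hl)).le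
    · exact fun l hl ↦ hle l (Finset.mem_of_mem_erase hl)
  · refine mul_lt_mul_of_pos_left (Finset.prod_lt_prod ?_ ?_ ?_) hci
    · exact fun l hl ↦ hpos l (Finset.mem_of_mem_erase hl)
    · exact fun l hl ↦ hle l (Finset.mem_of_mem_erase hl)
    · exact ⟨j, Finset.mem_erase.2 ⟨hij.symm, hj⟩,
        sub_lt_sub_left (mul_lt_mul_of_pos_left hxy hcj) 1⟩

theorem strictConcaveOn_likelihoodGap (hc : ∀ i ∈ d, c i ∈ Icc 0 1)
    (hpair : ∃ i ∈ d, ∃ j ∈ d, i ≠ j ∧ 0 < c i ∧ 0 < c j) :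
    StrictConcaveOn ℝ (Iic 1) (likelihoodGap d c) := by
  classical
  have hderiv : deriv (likelihoodGap d c) =
      fun x ↦ ∑ i ∈ d, c i * ∏ j ∈ d.erase i, (1 - c j * x) - 1 :=
    funext fun x ↦ (hasDerivAt_likelihoodGap d c x).deriv
  refine StrictAntiOn.strictConcaveOn_of_deriv (convex_Iic 1)
    differentiable_likelihoodGap.continuous.continuousOn ?_
  rw [interior_Iic, hderiv]
  exact fun x hx y hy hxy ↦ sub_lt_sub_right (strictAntiOn_sum_mul_prod_erase hc hpair hx hy hxy) 1

theorem existsUnique_likelihoodGap_eq_zero (hc : ∀ i ∈ d, c i ∈ Ico 0 1)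
    (hsum : 1 < ∑ i ∈ d, c i) : ∃! x, x ∈ Ioo 0 1 ∧ likelihoodGap d c x = 0 := by
  have hconcave : StrictConcaveOn ℝ (Iic 1) (likelihoodGap d c) :=
    strictConcaveOn_likelihoodGap (fun i hi ↦ Ico_subset_Icc_self (hc i hi))
      (exists_ne_pos_pos_of_one_lt_sum (fun i hi ↦ (hc i hi).2.le) hsum)
  obtain ⟨x, hx, hx_zero⟩ := exists_mem_Ioo_eq_of_hasDerivAt_pos one_pos
    differentiable_likelihoodGap.continuous.continuousOn hasDerivAt_likelihoodGap_zero
    (sub_pos.2 hsum) (by simpa using likelihoodGap_one_neg fun i hi ↦ (hc i hi).2)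
  rw [likelihoodGap_zero] at hx_zero
  refine ⟨x, ⟨hx, hx_zero⟩, fun y ⟨hy, hy_zero⟩ ↦ ?_⟩
  apply subsingleton_setOf_lt_and_apply_eq_of_strictConcaveOn hconcave (mem_Iic.2 zero_le_one)
  · exact ⟨hy.2.le, hy.1, hy_zero.trans likelihoodGap_zero.symm⟩
  · exact ⟨hx.2.le, hx.1, hx_zero.trans likelihoodGap_zero.symm⟩

theorem deriv_likelihoodGap_neg (hc : ∀ i ∈ d, c i ∈ Icc 0 1)
    (hpair : ∃ i ∈ d, ∃ j ∈ d, i ≠ j ∧ 0 < c i ∧ 0 < c j) (hx : x ∈ Ioc 0 1)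
    (hx_zero : likelihoodGap d c x = 0) : deriv (likelihoodGap d c) x < 0 :=
  deriv_neg_of_strictConcaveOn_of_apply_eq (strictConcaveOn_likelihoodGap hc hpair)
    (mem_Iic.2 zero_le_one) hx.2 hx.1 (likelihoodGap_zero.trans hx_zero.symm)
    differentiable_likelihoodGap.differentiableAt

end LikelihoodGap

theorem root_continuously_differentiable_general {ι : Type*} [Fintype ι] (d : Finset ι) :
    ∃ φ : (ι → ℝ) → ℝ,
      ContDiffOn ℝ ω φ {c | (∀ i ∈ d, c i ∈ Ico (0 : ℝ) 1) ∧ 1 < ∑ i ∈ d, c i} ∧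
      ∀ c ∈ {c : ι → ℝ | (∀ i ∈ d, c i ∈ Ico (0 : ℝ) 1) ∧ 1 < ∑ i ∈ d, c i},
        (φ c ∈ Ioo (0 : ℝ) 1 ∧ 1 - φ c = ∏ i ∈ d, (1 - c i * φ c)) ∧
        ∀ x ∈ Ioo (0 : ℝ) 1, 1 - x = ∏ i ∈ d, (1 - c i * x) → x = φ c := by
  simp only [← likelihoodGap_eq_zero_iff]
  have hroot : ∀ c ∈ {c : ι → ℝ | (∀ i ∈ d, c i ∈ Ico (0 : ℝ) 1) ∧ 1 < ∑ i ∈ d, c i},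
      ∃! x, x ∈ Ioo 0 1 ∧ likelihoodGap d c x = 0 :=
    fun c hc ↦ existsUnique_likelihoodGap_eq_zero hc.1 hc.2
  choose! φ hφ hφ_unique using hroot
  refine ⟨φ, ?_, fun c hc ↦ ⟨hφ c hc, fun x hx hx_zero ↦ hφ_unique c hc x ⟨hx, hx_zero⟩⟩⟩
  refine contDiffOn_of_apply_eq_zero_of_unique (by simp) isOpen_Ioo
    (fun c _ ↦ contDiff_likelihoodGap.contDiffAt) (fun c hc ↦ ?_) (fun c hc ↦ (hφ c hc).1)
    (fun c hc ↦ (hφ c hc).2) (fun c hc x hx hx_zero ↦ hφ_unique c hc x ⟨hx, hx_zero⟩)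
  have hderiv : deriv (likelihoodGap d c) (φ c) < 0 :=
    deriv_likelihoodGap_neg (fun i hi ↦ Ico_subset_Icc_self (hc.1 i hi))
      (exists_ne_pos_pos_of_one_lt_sum (fun i hi ↦ (hc.1 i hi).2.le) hc.2)
      (Ioo_subset_Ioc_self (hφ c hc).1) (hφ c hc).2
  exact isInvertible_fderiv_comp_inr_of_hasDerivAt
    (contDiff_likelihoodGap.differentiable one_ne_zero).differentiableAt
    differentiable_likelihoodGap.differentiableAt.hasDerivAt hderiv.ne

/-- Smooth dependence of the root of the likelihood polynomial on the empirical
pass rates: there is a continuously differentiable map `φ` on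
`C = {c | ∀ i ∈ d, c i ∈ (0,1), ∑ c i > 1}` giving the unique solution in `(0,1)`. -/
theorem root_continuously_differentiable {ι : Type*} [Fintype ι] [DecidableEq ι]
    (d : Finset ι) :
    ∃ φ : (ι → ℝ) → ℝ,
      ContDiffOn ℝ 1 φ {c | (∀ i ∈ d, c i ∈ Set.Ioo (0 : ℝ) 1) ∧ 1 < ∑ i ∈ d, c i} ∧
      ∀ c ∈ {c : ι → ℝ | (∀ i ∈ d, c i ∈ Set.Ioo (0 : ℝ) 1) ∧ 1 < ∑ i ∈ d, c i},
        φ c ∈ Set.Ioo (0 : ℝ) 1 ∧ 1 - φ c = ∏ i ∈ d, (1 - c i * φ c) := by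
  obtain ⟨φ, hφ_contDiff, hφ⟩ := root_continuously_differentiable_general d
  have hsub : {c : ι → ℝ | (∀ i ∈ d, c i ∈ Ioo (0 : ℝ) 1) ∧ 1 < ∑ i ∈ d, c i} ⊆
      {c | (∀ i ∈ d, c i ∈ Ico (0 : ℝ) 1) ∧ 1 < ∑ i ∈ d, c i} :=
    fun c hc ↦ ⟨fun i hi ↦ Ioo_subset_Ico_self (hc.1 i hi), hc.2⟩
  exact ⟨φ, (hφ_contDiff.of_le le_top).mono hsub, fun c hc ↦ (hφ c (hsub hc)).1⟩
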